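/- Let m ≥ n ≥ 1. Then (J_G̃ ∩ A_n) + (J_G̃ ∩ B_m) = J_G̃, i.e. the ideal generated by J_G̃ ∩ A_n together with J_G̃ ∩ B_m equals J_G̃. -/

import Mathlib

open MvPolynomial

noncomputable section

abbrev VIdx (N : ℕ) := Fin N ⊕ Fin N

def vtx {N : ℕ} : VIdx N → Fin N := Sum.elim id id

abbrev PolyS (K : Type) [Field K] (N : ℕ) := MvPolynomial (VIdx N) K

def xv {K : Type} [Field K] {N : ℕ} (i : Fin N) : PolyS K N := X (Sum.inl i)

def yv {K : Type} [Field K] {N : ℕ} (i : Fin N) : PolyS K N := X (Sum.inr i)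

/-- The binomial edge ideal of a graph `G` on `Fin N`. -/
def beIdeal {K : Type} [Field K] {N : ℕ} (G : SimpleGraph (Fin N)) : Ideal (PolyS K N) :=
  Ideal.span {f | ∃ i j : Fin N, G.Adj i j ∧ f = xv i * yv j - xv j * yv i}

/-- The ideal `A_n = (x_1,…,x_n,y_1,…,y_n)`. -/
def idealA {K : Type} [Field K] {N : ℕ} (n : ℕ) : Ideal (PolyS K N) :=
  Ideal.span {f | ∃ v : VIdx N, (vtx v).val < n ∧ f = X v}

/-- The ideal `B_m = (x_{n+1},…,x_{n+m},y_{n+1},…,y_{n+m})` for `n ≥ 2`, and the unit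
ideal for `n = 1`. -/
def idealB {K : Type} [Field K] {N : ℕ} (n : ℕ) : Ideal (PolyS K N) :=
  if n = 1 then ⊤ else Ideal.span {f | ∃ v : VIdx N, n ≤ (vtx v).val ∧ f = X v}

theorem span_inf_sup_span_inf_eq_span {R M : Type*} [Semiring R] [AddCommMonoid M] [Module R M]
    {s : Set M} {P Q : Submodule R M} (hs : s ⊆ ↑P ∪ ↑Q) :
    (Submodule.span R s ⊓ P) ⊔ (Submodule.span R s ⊓ Q) = Submodule.span R s := by
  refine le_antisymm (sup_le inf_le_left inf_le_left) (Submodule.span_le.2 fun f hf ↦ ?_)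
  have hf_span : f ∈ Submodule.span R s := Submodule.subset_span hf
  rcases hs hf with hfP | hfQ
  · exact Submodule.mem_sup_left ⟨hf_span, hfP⟩
  · exact Submodule.mem_sup_right ⟨hf_span, hfQ⟩

section EdgeBinomials

variable {K : Type} [Field K] {N : ℕ}

theorem xv_mul_yv_sub_mem {I : Ideal (PolyS K N)} {i : Fin N} (hx : xv i ∈ I) (hy : yv i ∈ I)
    (j : Fin N) : xv i * yv j - xv j * yv i ∈ I :=
  I.sub_mem (I.mul_mem_right _ hx) (I.mul_mem_left _ hy)

theorem X_mem_idealA {n : ℕ} {v : VIdx N} (hv : (vtx v).val < n) : (X v : PolyS K N) ∈ idealA n :=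
  Ideal.subset_span ⟨v, hv, rfl⟩

theorem X_mem_idealB {n : ℕ} {v : VIdx N} (hv : n ≤ (vtx v).val) :
    (X v : PolyS K N) ∈ idealB n := by
  unfold idealB
  split_ifs
  · exact Submodule.mem_top
  · exact Ideal.subset_span ⟨v, hv, rfl⟩

theorem sup_inter_eq_complete_general (G : SimpleGraph (Fin N)) (n : ℕ) :
    (beIdeal (K := K) G ⊓ idealA n) ⊔ (beIdeal (K := K) G ⊓ idealB n) = beIdeal (K := K) G := by
  refine span_inf_sup_span_inf_eq_span ?_
  rintro _ ⟨i, j, -, rfl⟩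
  rcases lt_or_ge i.val n with hi | hi
  · exact Or.inl (xv_mul_yv_sub_mem (X_mem_idealA hi) (X_mem_idealA hi) j)
  · exact Or.inr (xv_mul_yv_sub_mem (X_mem_idealB hi) (X_mem_idealB hi) j)

end EdgeBinomials

/-- For `m ≥ n ≥ 1`, the ideal generated by `J_G̃ ∩ A_n` together with
`J_G̃ ∩ B_m` equals `J_G̃`, where `G̃` is the complete graph on `n + m` vertices. -/
theorem sup_inter_eq_complete
    (K : Type) [Field K] (m n : ℕ) (hn : 1 ≤ n) (hm : n ≤ m) :
    (beIdeal (K := K) (⊤ : SimpleGraph (Fin (n + m))) ⊓ idealA n) ⊔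
        (beIdeal (K := K) (⊤ : SimpleGraph (Fin (n + m))) ⊓ idealB n) =
      beIdeal (K := K) (⊤ : SimpleGraph (Fin (n + m))) :=
  sup_inter_eq_complete_general ⊤ n

end
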